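/- Let d ≥ 1, let ν be a compactly supported Borel probability measure on ℝ^d, let g, r ∈ ℝ with r > 0, and let x* ~ ν and z ~ N(0, I_d) be independent random vectors on a probability space; set x = g·x* + r·z. Define m(y) = (∫ x' exp(−‖y − g·x'‖²/(2r²)) dν(x')) / (∫ exp(−‖y − g·x'‖²/(2r²)) dν(x')). Then m(x) is a version of the conditional expectation of x* given the σ-algebra generated by x: E[x* | σ(x)] = m(x) almost surely. -/

import Mathlib

open MeasureTheory Real
open scoped RealInnerProductSpace

/-- The standard Gaussian measure `N(0, I_d)` on `ℝ^d`. -/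
noncomputable def stdGaussian (d : ℕ) : Measure (EuclideanSpace ℝ (Fin d)) :=
  volume.withDensity fun x =>
    ENNReal.ofReal ((2 * π) ^ (-(d : ℝ) / 2) * exp (-‖x‖ ^ 2 / 2))



theorem aux_cov {d : ℕ} (a : EuclideanSpace ℝ (Fin d)) {r : ℝ} (hr : 0 < r) {H : (EuclideanSpace ℝ (Fin d)) → ENNReal} (hH : Measurable H) :
    ∫⁻ z, H (a + r • z) = ENNReal.ofReal (abs (r ^ d)⁻¹) * ∫⁻ y, H y := by
  have h1 : ∫⁻ z : EuclideanSpace ℝ (Fin d), H (a + r • z) = ∫⁻ u, H (a + u) ∂(Measure.map (r • ·) volume) := by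
    rw [lintegral_map (by fun_prop) (by fun_prop)]
  rw [h1, Measure.map_addHaar_smul volume hr.ne', lintegral_smul_measure,
    lintegral_add_left_eq_self H a]
  simp

theorem aux_law {d : ℕ} {Ω : Type*} [MeasurableSpace Ω] (P : Measure Ω) [IsProbabilityMeasure P]
    (ν : Measure (EuclideanSpace ℝ (Fin d))) [IsProbabilityMeasure ν]
    (g r : ℝ) (hr : 0 < r) (X Z : Ω → EuclideanSpace ℝ (Fin d)) (hX : Measurable X) (hZ : Measurable Z)
    (hXlaw : P.map X = ν) (hZlaw : P.map Z = stdGaussian d)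
    (hindep : ProbabilityTheory.IndepFun X Z P) :
    ∃ c : ℝ, 0 < c ∧ P.map (fun ω => (X ω, g • X ω + r • Z ω)) =
      (ν.prod volume).withDensity (fun p =>
        ENNReal.ofReal (c * exp (-‖p.2 - g • p.1‖ ^ 2 / (2 * r ^ 2)))) := by
  have hC : 0 < (2 * π) ^ (-(d : ℝ) / 2) := by positivity
  refine ⟨abs (r ^ d)⁻¹ * (2 * π) ^ (-(d : ℝ) / 2), by positivity, ?_⟩
  set C := (2 * π) ^ (-(d : ℝ) / 2) with hCdef
  have hprob : IsProbabilityMeasure (stdGaussian d) := by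
    rw [← hZlaw]; exact Measure.isProbabilityMeasure_map hZ.aemeasurable
  have hjoint := hindep.map_prod_eq_prod_map_map hX.aemeasurable hZ.aemeasurable
  rw [hXlaw, hZlaw] at hjoint
  have hmap : P.map (fun ω => (X ω, g • X ω + r • Z ω)) =
      (ν.prod (stdGaussian d)).map (fun p => (p.1, g • p.1 + r • p.2)) := by
    rw [← hjoint, Measure.map_map (by fun_prop) (by fun_prop)]
    rfl
  rw [hmap]
  refine Measure.ext_of_lintegral _ fun f hf => ?_
  rw [lintegral_map hf (by fun_prop),
    lintegral_withDensity_eq_lintegral_mul _ (by fun_prop) hf,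
    lintegral_prod _ (by fun_prop), lintegral_prod _ (by fun_prop)]
  refine lintegral_congr fun x => ?_
  have h2 : ∀ h : (EuclideanSpace ℝ (Fin d)) → ENNReal, Measurable h → ∫⁻ z, h z ∂(stdGaussian d) =
      ∫⁻ z, ENNReal.ofReal (C * exp (-‖z‖ ^ 2 / 2)) * h z := by
    intro h hh
    rw [stdGaussian, lintegral_withDensity_eq_lintegral_mul _ (by fun_prop) hh]
    rfl
  rw [h2 _ (by fun_prop)]
  have h3 := aux_cov (g • x) hr (H := fun y => ENNReal.ofReal
    (C * exp (-‖y - g • x‖ ^ 2 / (2 * r ^ 2))) * f (x, y)) (by fun_prop)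
  rw [← lintegral_const_mul _ (by fun_prop)] at h3
  convert h3 using 1
  · refine lintegral_congr fun z => ?_
    have : -‖g • x + r • z - g • x‖ ^ 2 / (2 * r ^ 2) = -‖z‖ ^ 2 / 2 := by
      rw [add_sub_cancel_left, norm_smul, Real.norm_eq_abs, mul_pow, sq_abs]
      field_simp
    simp only [this]
  · refine lintegral_congr fun y => ?_
    simp only [Pi.mul_apply]
    rw [← mul_assoc, ← ENNReal.ofReal_mul (by positivity), mul_assoc]

/-- the explicit Gaussian-weighted ratio of integrals `m` is a version of the
posterior mean `E[x* | σ(x)]` for the linear interpolant `x = g • x* + r • z`. -/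
theorem stmt_13 {d : ℕ} (hd : 1 ≤ d)
    {Ω : Type*} [MeasurableSpace Ω] (P : Measure Ω) [IsProbabilityMeasure P]
    (ν : Measure (EuclideanSpace ℝ (Fin d))) [IsProbabilityMeasure ν]
    (hν : ∃ K : Set (EuclideanSpace ℝ (Fin d)), IsCompact K ∧ ν Kᶜ = 0)
    (g r : ℝ) (hr : 0 < r)
    (X Z : Ω → EuclideanSpace ℝ (Fin d)) (hX : Measurable X) (hZ : Measurable Z)
    (hXlaw : P.map X = ν) (hZlaw : P.map Z = stdGaussian d)
    (hindep : ProbabilityTheory.IndepFun X Z P)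
    (m : EuclideanSpace ℝ (Fin d) → EuclideanSpace ℝ (Fin d))
    (hm : ∀ y, m y = (∫ x', exp (-‖y - g • x'‖ ^ 2 / (2 * r ^ 2)) ∂ν)⁻¹ •
      ∫ x', exp (-‖y - g • x'‖ ^ 2 / (2 * r ^ 2)) • x' ∂ν) :
    P[X | MeasurableSpace.comap (fun ω => g • X ω + r • Z ω) inferInstance]
      =ᵐ[P] fun ω => m (g • X ω + r • Z ω) := by
  obtain ⟨K, hK, hKν⟩ := hν
  obtain ⟨R, hR⟩ := hK.isBounded.exists_norm_le
  have hbν : ∀ᵐ x ∂ν, ‖x‖ ≤ R := by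
    have : ∀ᵐ x ∂ν, x ∈ K := hKν
    filter_upwards [this] with x hx using hR x hx
  have hbX : ∀ᵐ ω ∂P, ‖X ω‖ ≤ R := by
    rw [← hXlaw] at hbν
    exact ae_of_ae_map hX.aemeasurable hbν
  obtain ⟨c, hc, hlaw⟩ := aux_law P ν g r hr X Z hX hZ hXlaw hZlaw hindep
  have hwle : ∀ x y : EuclideanSpace ℝ (Fin d), exp (-‖y - g • x‖ ^ 2 / (2 * r ^ 2)) ≤ 1 := by
    intro x y
    rw [Real.exp_le_one_iff, neg_div, neg_nonpos]
    positivity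
  have hwint : ∀ y, Integrable (fun x' => exp (-‖y - g • x'‖ ^ 2 / (2 * r ^ 2))) ν := by
    intro y
    refine Integrable.of_bound (by fun_prop) 1 (ae_of_all _ fun x => ?_)
    rw [Real.norm_eq_abs, abs_of_pos (exp_pos _)]
    exact hwle x y
  have hDpos : ∀ y, 0 < ∫ x', exp (-‖y - g • x'‖ ^ 2 / (2 * r ^ 2)) ∂ν :=
    fun y => integral_exp_pos (hwint y)
  have hmD : ∀ y, (∫ x', exp (-‖y - g • x'‖ ^ 2 / (2 * r ^ 2)) ∂ν) • m y =
      ∫ x', exp (-‖y - g • x'‖ ^ 2 / (2 * r ^ 2)) • x' ∂ν := by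
    intro y
    rw [hm, smul_smul, mul_inv_cancel₀ (hDpos y).ne', one_smul]
  have hmb : ∀ y, ‖m y‖ ≤ R := by
    intro y
    rw [hm, norm_smul, norm_inv, Real.norm_eq_abs, abs_of_pos (hDpos y),
      inv_mul_le_iff₀ (hDpos y), ← integral_mul_const]
    refine norm_integral_le_of_norm_le ((hwint y).mul_const R) ?_
    filter_upwards [hbν] with x hx
    rw [norm_smul, Real.norm_eq_abs, abs_of_pos (exp_pos _)]
    gcongr
  have hmm : Measurable m := by
    have h1 : StronglyMeasurable fun y : EuclideanSpace ℝ (Fin d) =>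
        ∫ x', exp (-‖y - g • x'‖ ^ 2 / (2 * r ^ 2)) ∂ν := by
      refine StronglyMeasurable.integral_prod_right (f := fun y x' => exp (-‖y - g • x'‖ ^ 2 / (2 * r ^ 2))) ?_
      apply Measurable.stronglyMeasurable
      unfold Function.uncurry
      fun_prop
    have h2 : StronglyMeasurable fun y : EuclideanSpace ℝ (Fin d) =>
        ∫ x', exp (-‖y - g • x'‖ ^ 2 / (2 * r ^ 2)) • x' ∂ν := by
      refine StronglyMeasurable.integral_prod_right (f := fun y x' => exp (-‖y - g • x'‖ ^ 2 / (2 * r ^ 2)) • x') ?_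
      apply Measurable.stronglyMeasurable
      unfold Function.uncurry
      fun_prop
    have : m = _ := funext hm
    rw [this]
    exact h1.measurable.inv.smul h2.measurable
  have hYm : Measurable fun ω => g • X ω + r • Z ω := by fun_prop
  have hXint : Integrable X P := Integrable.of_bound hX.aestronglyMeasurable R hbX
  have hmint : Integrable (fun ω => m (g • X ω + r • Z ω)) P :=
    Integrable.of_bound (hmm.comp hYm).aestronglyMeasurable R (ae_of_all _ fun _ => hmb _)
  have hXY : Measurable fun ω => (X ω, g • X ω + r • Z ω) := by fun_prop
  -- general formula for integrals against the joint law
  have key : ∀ (F : EuclideanSpace ℝ (Fin d) × EuclideanSpace ℝ (Fin d) →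
      EuclideanSpace ℝ (Fin d)) (B : Set (EuclideanSpace ℝ (Fin d))), Measurable F →
      MeasurableSet B → Integrable (fun ω => F (X ω, g • X ω + r • Z ω)) P →
      ∫ ω in (fun ω => g • X ω + r • Z ω) ⁻¹' B, F (X ω, g • X ω + r • Z ω) ∂P =
        ∫ y, c • B.indicator (fun y =>
          ∫ x, exp (-‖y - g • x‖ ^ 2 / (2 * r ^ 2)) • F (x, y) ∂ν) y := by
    intro F B hF hB hint
    have hB2 : MeasurableSet ((Prod.snd : EuclideanSpace ℝ (Fin d) × EuclideanSpace ℝ (Fin d) → _)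
      ⁻¹' B) := measurable_snd hB
    have hG : Measurable ((Prod.snd ⁻¹' B).indicator F) := hF.indicator hB2
    have hint' : Integrable ((Prod.snd ⁻¹' B).indicator F)
        (P.map (fun ω => (X ω, g • X ω + r • Z ω))) := by
      refine Integrable.indicator ?_ hB2
      exact (integrable_map_measure hF.aestronglyMeasurable hXY.aemeasurable).2 hint
    have e1 : ∫ ω in (fun ω => g • X ω + r • Z ω) ⁻¹' B, F (X ω, g • X ω + r • Z ω) ∂P =
        ∫ p, (Prod.snd ⁻¹' B).indicator F p ∂(P.map (fun ω => (X ω, g • X ω + r • Z ω))) := by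
      rw [integral_indicator hB2,
        setIntegral_map hB2 hF.aestronglyMeasurable hXY.aemeasurable]
      rfl
    rw [e1]
    rw [hlaw] at hint' ⊢
    rw [integrable_withDensity_iff_integrable_smul' (by fun_prop) (by simp)] at hint'
    rw [integral_withDensity_eq_integral_toReal_smul (by fun_prop) (by simp),
      integral_prod_symm _ hint']
    refine integral_congr_ae (ae_of_all _ fun y => ?_)
    by_cases hy : y ∈ B
    · simp only [Set.indicator, Set.mem_preimage, hy, if_true]
      rw [← integral_smul]
      refine integral_congr_ae (ae_of_all _ fun x => ?_)
      simp only
      rw [ENNReal.toReal_ofReal (by positivity), mul_smul]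
    · simp [Set.indicator, hy]
  symm
  refine ae_eq_condExp_of_forall_setIntegral_eq hYm.comap_le hXint
    (fun s _ _ => hmint.integrableOn) ?_ ?_
  · rintro s ⟨B, hB, rfl⟩ -
    rw [key (fun p => m p.2) B (by fun_prop) hB hmint, key (fun p => p.1) B (by fun_prop) hB hXint]
    simp only [integral_smul_const, hmD]
  · apply StronglyMeasurable.aestronglyMeasurable
    exact hmm.stronglyMeasurable.comp_measurable (comap_measurable _)
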